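/- arXiv:1409.3856 — 8 statements merged into one kernel-verified Lean document; each statement's English description precedes it below -/
import Mathlib

section
/- For all positive integers s and t there exists a constant C > 0 such that for every positive integer n, every simple graph G on n vertices that contains no copy of the complete bipartite graph K_{s,t} as a subgraph has at most C · n^{2 - 1/s} edges. -/
/-!
The proof double counts pairs `(v, A)` where `A` is an `s`-element subset of the neighbourhood of
`v`. Summing over `v` gives `∑ v, (deg v).choose s`. Summing over `A` gives at most
`t * n.choose s`, since `t` common neighbours of a fixed `A` would form a `K_{s,t}` with it
(`sum_choose_degree_le`). As `(d + 1 - s) ^ s ≤ s! * d.choose s`, the truncated degrees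
`d + 1 - s` have `s`-th powers summing to at most `t * n ^ s`, so by the power mean inequality
their sum `X` satisfies `X ^ s ≤ t * n ^ (2 * s - 1)` (`sum_truncated_degree_pow_le`).
Truncation costs at most `s * n` in the degree sum, which is absorbed because
`n ≤ n ^ (2 - 1 / s)`; hence `C = t + s` works.
-/

/-- A simple graph `G` contains a copy of the complete bipartite graph `K_{s,t}`:
there are disjoint vertex sets `A`, `B` with `|A| = s`, `|B| = t`, and every
vertex of `A` adjacent to every vertex of `B`. -/
def ContainsKst {V : Type*} (G : SimpleGraph V) (s t : ℕ) : Prop :=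
  ∃ A B : Finset V, A.card = s ∧ B.card = t ∧ Disjoint A B ∧
    ∀ a ∈ A, ∀ b ∈ B, G.Adj a b

open Finset in
/-- The double count of pairs (vertex, `s`-subset of its neighbourhood). -/
lemma sum_choose_degree_le {V : Type*} [Fintype V] [DecidableEq V] (G : SimpleGraph V)
    [DecidableRel G.Adj] {s t : ℕ} (h : ¬ ContainsKst G s t) :
    ∑ v, (G.degree v).choose s ≤ t * (Fintype.card V).choose s := by
  have key := sum_card_bipartiteAbove_eq_sum_card_bipartiteBelow
    (s := (univ : Finset V)) (t := powersetCard s (univ : Finset V))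
    (fun v A => A ⊆ G.neighborFinset v)
  have hleft : ∀ v ∈ (univ : Finset V), (G.degree v).choose s =
      #(bipartiteAbove (fun v A => A ⊆ G.neighborFinset v) (powersetCard s univ) v) := by
    intro v _
    rw [← G.card_neighborFinset_eq_degree v, ← card_powersetCard]
    congr 1
    ext A
    simp [bipartiteAbove, mem_powersetCard, and_comm]
  rw [sum_congr rfl hleft, key, mul_comm, ← card_univ, ← card_powersetCard, ← smul_eq_mul]
  refine sum_le_card_nsmul _ _ _ fun A hA => ?_
  by_contra! hlt
  obtain ⟨B, hB, hBt⟩ := exists_subset_card_eq hlt.le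
  have hadj : ∀ a ∈ A, ∀ b ∈ B, G.Adj a b := by
    intro a ha b hb
    have hb' := (mem_bipartiteBelow _).1 (hB hb)
    exact ((G.mem_neighborFinset b a).1 (hb'.2 ha)).symm
  refine h ⟨A, B, (mem_powersetCard.1 hA).2, hBt, ?_, hadj⟩
  exact disjoint_left.2 fun a ha hb => G.irrefl (hadj a ha a hb)

open Finset in
/-- Power mean inequality applied to the double count. The subtraction is truncated, so vertices
of degree less than `s` contribute `0`, matching `(deg v).choose s = 0`. -/
lemma sum_truncated_degree_pow_le {V : Type*} [Fintype V] [DecidableEq V] (G : SimpleGraph V)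
    [DecidableRel G.Adj] {s t : ℕ} (hs : 0 < s) (h : ¬ ContainsKst G s t) :
    (∑ v, (G.degree v + 1 - s)) ^ s ≤ t * Fintype.card V ^ (2 * s - 1) := by
  obtain ⟨k, rfl⟩ : ∃ k, s = k + 1 := ⟨s - 1, by omega⟩
  calc (∑ v, (G.degree v + 1 - (k + 1))) ^ (k + 1)
      ≤ Fintype.card V ^ k * ∑ v, (G.degree v + 1 - (k + 1)) ^ (k + 1) := by
        rw [← card_univ]
        exact pow_sum_le_card_mul_sum_pow (fun _ _ => Nat.zero_le _) k
    _ ≤ Fintype.card V ^ k * ∑ v, (k + 1).factorial * (G.degree v).choose (k + 1) := by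
        gcongr with v
        rw [← Nat.descFactorial_eq_factorial_mul_choose]
        exact Nat.pow_sub_le_descFactorial _ _
    _ ≤ Fintype.card V ^ k * (t * Fintype.card V ^ (k + 1)) := by
        rw [← mul_sum]
        refine Nat.mul_le_mul_left _ ?_
        calc (k + 1).factorial * ∑ v, (G.degree v).choose (k + 1)
            ≤ (k + 1).factorial * (t * (Fintype.card V).choose (k + 1)) :=
              Nat.mul_le_mul_left _ (sum_choose_degree_le G h)
          _ = t * (Fintype.card V).descFactorial (k + 1) := by
              rw [Nat.descFactorial_eq_factorial_mul_choose]; ring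
          _ ≤ t * Fintype.card V ^ (k + 1) :=
              Nat.mul_le_mul_left _ (Nat.descFactorial_le_pow _ _)
    _ = t * Fintype.card V ^ (2 * (k + 1) - 1) := by
        rw [show 2 * (k + 1) - 1 = k + (k + 1) by omega, pow_add]; ring

/-- Kővári–Sós–Turán: every `K_{s,t}`-free graph on `n` vertices has
at most `C · n^{2 - 1/s}` edges. -/
theorem kovari_sos_turan (s t : ℕ) (hs : 0 < s) (ht : 0 < t) :
    ∃ C : ℝ, 0 < C ∧ ∀ n : ℕ, 0 < n →
      ∀ (G : SimpleGraph (Fin n)) (_ : DecidableRel G.Adj),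
        ¬ ContainsKst G s t →
        (G.edgeFinset.card : ℝ) ≤ C * (n : ℝ) ^ (2 - 1 / (s : ℝ)) := by
  refine ⟨t + s, by positivity, fun n hn G _ h => ?_⟩
  set N : ℝ := (n : ℝ) ^ (2 - 1 / (s : ℝ)) with hN
  have hs1 : (1 : ℝ) ≤ s := by exact_mod_cast hs
  have hn1 : (1 : ℝ) ≤ n := by exact_mod_cast hn
  have hN0 : 0 ≤ N := by positivity
  have hNs : N ^ s = (n : ℝ) ^ (2 * s - 1) := by
    rw [hN, ← Real.rpow_mul_natCast (by positivity), ← Real.rpow_natCast]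
    congr 1
    rw [Nat.cast_sub (by omega)]
    push_cast
    field_simp
  have hnN : (n : ℝ) ≤ N := by
    have h1 : 1 / (s : ℝ) ≤ 1 := (div_le_one (by positivity)).2 hs1
    have h2 : (1 : ℝ) ≤ 2 - 1 / (s : ℝ) := by linarith
    calc (n : ℝ) = (n : ℝ) ^ (1 : ℝ) := (Real.rpow_one _).symm
      _ ≤ N := Real.rpow_le_rpow_of_exponent_le hn1 h2
  set X : ℕ := ∑ v, (G.degree v + 1 - s) with hX
  have hXN : (X : ℝ) ≤ t * N := by
    refine le_of_pow_le_pow_left₀ hs.ne' (by positivity) ?_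
    have h1 := sum_truncated_degree_pow_le G hs h
    rw [Fintype.card_fin] at h1
    calc (X : ℝ) ^ s ≤ t * (n : ℝ) ^ (2 * s - 1) := by exact_mod_cast h1
      _ ≤ (t : ℝ) ^ s * (n : ℝ) ^ (2 * s - 1) := by
        gcongr
        exact_mod_cast Nat.le_self_pow hs.ne' t
      _ = (t * N) ^ s := by rw [mul_pow, hNs]
  have hdeg : 2 * G.edgeFinset.card ≤ X + s * n := by
    rw [← G.sum_degrees_eq_twice_card_edges]
    calc ∑ v, G.degree v ≤ ∑ v, ((G.degree v + 1 - s) + s) :=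
          Finset.sum_le_sum fun v _ => by omega
      _ = X + s * n := by simp [Finset.sum_add_distrib, hX, mul_comm]
  have hdeg' : 2 * (G.edgeFinset.card : ℝ) ≤ X + s * n := by exact_mod_cast hdeg
  have hsn : (s : ℝ) * n ≤ s * N := by gcongr
  have he : (0 : ℝ) ≤ G.edgeFinset.card := by positivity
  linarith
end

section
/- Let s ≥ 1 and t ≥ 1 be integers and let G be a simple graph on n vertices containing no copy of K_{s,t}. Then the sum over all vertices v of G of the binomial coefficient C(deg(v), s) is at most (t - 1) · C(n, s), where deg(v) denotes the degree of v. -/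
/-- In a `K_{s,t}`-free graph on `n` vertices,
`Σ_v C(deg v, s) ≤ (t-1) · C(n, s)`. -/
theorem star_count_bound (s t n : ℕ) (hs : 1 ≤ s) (ht : 1 ≤ t)
    (G : SimpleGraph (Fin n)) [DecidableRel G.Adj]
    (hfree : ¬ ContainsKst G s t) :
    ∑ v : Fin n, (G.degree v).choose s ≤ (t - 1) * n.choose s := by
  classical
  have hdeg : ∀ v : Fin n, (G.degree v).choose s =
      (((Finset.univ : Finset (Fin n)).powersetCard s).bipartiteAbove
        (fun v A => A ⊆ G.neighborFinset v) v).card := by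
    intro v
    rw [← G.card_neighborFinset_eq_degree, ← Finset.card_powersetCard]
    congr 1
    ext A
    simp [Finset.mem_bipartiteAbove, Finset.mem_powersetCard, and_comm]
  rw [Finset.sum_congr rfl fun v _ => hdeg v,
    Finset.sum_card_bipartiteAbove_eq_sum_card_bipartiteBelow]
  have hbelow : ∀ A ∈ (Finset.univ : Finset (Fin n)).powersetCard s,
      ((Finset.univ : Finset (Fin n)).bipartiteBelow
        (fun v A => A ⊆ G.neighborFinset v) A).card ≤ t - 1 := by
    intro A hA
    by_contra! hlt
    obtain ⟨B, hB, hBt⟩ := Finset.exists_subset_card_eq (Nat.le_of_pred_lt hlt)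
    have hadj : ∀ a ∈ A, ∀ b ∈ B, G.Adj a b := by
      intro a ha b hb
      have hAb := (Finset.mem_bipartiteBelow _).1 (hB hb) |>.2
      exact ((G.mem_neighborFinset b a).1 (hAb ha)).symm
    refine hfree ⟨A, B, (Finset.mem_powersetCard.1 hA).2, hBt, ?_, hadj⟩
    exact Finset.disjoint_left.2 fun a ha hb => G.irrefl (hadj a ha a hb)
  calc _ ≤ ((Finset.univ : Finset (Fin n)).powersetCard s).card • (t - 1) :=
        Finset.sum_le_card_nsmul _ _ _ hbelow
    _ = (t - 1) * n.choose s := by simp [mul_comm]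
end

section
/- For all positive integers s and t there exist a constant C > 0 and an integer n₀ such that for every n ≥ n₀, every simple graph on n vertices in which every vertex has degree at least C · n^{1 - 1/s} contains a copy of the complete bipartite graph K_{s,t}. -/
/-- Pigeonhole: the right side of `h` counts pairs of a vertex and an `s`-set of its neighbours, so
some `s`-set has at least `t` common neighbours. Disjointness is automatic as `G` has no loops. -/
lemma exists_common_neighbours {V : Type*} [Fintype V] (G : SimpleGraph V)
    [DecidableRel G.Adj] (s t : ℕ)
    (h : (t - 1) * (Fintype.card V).choose s < ∑ v : V, (G.degree v).choose s) :
    ContainsKst G s t := by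
  classical
  by_contra hK
  let P : Finset (Finset V) := Finset.powersetCard s Finset.univ
  let r : V → Finset V → Prop := fun v S => S ⊆ G.neighborFinset v
  have hcount := Finset.sum_card_bipartiteAbove_eq_sum_card_bipartiteBelow
    (s := (Finset.univ : Finset V)) (t := P) r
  have habove (v : V) : (P.bipartiteAbove r v).card = (G.degree v).choose s := by
    rw [← G.card_neighborFinset_eq_degree, ← Finset.card_powersetCard]
    congr 1
    ext S
    simp [P, r, Finset.mem_bipartiteAbove, Finset.mem_powersetCard, and_comm]
  have hbelow (S : Finset V) (hS : S ∈ P) :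
      ((Finset.univ : Finset V).bipartiteBelow r S).card ≤ t - 1 := by
    by_contra hlt
    obtain ⟨B, hB, hBt⟩ := Finset.exists_subset_card_eq
      (show t ≤ ((Finset.univ : Finset V).bipartiteBelow r S).card by omega)
    have hadj : ∀ a ∈ S, ∀ b ∈ B, G.Adj a b := fun a ha b hb =>
      ((G.mem_neighborFinset b a).1 ((Finset.mem_bipartiteBelow r).1 (hB hb) |>.2 ha)).symm
    exact hK ⟨S, B, (Finset.mem_powersetCard.1 hS).2, hBt,
      Finset.disjoint_left.2 fun x hx hx' => G.loopless.irrefl x (hadj x hx x hx'), hadj⟩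
  simp only [habove] at hcount
  have hle := Finset.sum_le_card_nsmul _ _ _ hbelow
  rw [← hcount, Finset.card_powersetCard, Finset.card_univ, smul_eq_mul, mul_comm] at hle
  omega

/-- For all `s, t ≥ 1` there are `C > 0` and `n₀` such that every graph on
`n ≥ n₀` vertices of minimum degree at least `C · n^{1 - 1/s}` contains `K_{s,t}`. -/
theorem min_degree_forces_Kst (s t : ℕ) (hs : 0 < s) (ht : 0 < t) :
    ∃ C : ℝ, 0 < C ∧ ∃ n₀ : ℕ, ∀ n : ℕ, n₀ ≤ n →
      ∀ (G : SimpleGraph (Fin n)) (_ : DecidableRel G.Adj),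
        (∀ v : Fin n, C * (n : ℝ) ^ (1 - 1 / (s : ℝ)) ≤ (G.degree v : ℝ)) →
        ContainsKst G s t := by
  refine ⟨s + t, by positivity, 1, fun n hn G _ hdeg => exists_common_neighbours G s t ?_⟩
  have hs1 : (1 : ℝ) ≤ s := by exact_mod_cast hs
  have hn1 : (1 : ℝ) ≤ n := by exact_mod_cast hn
  -- `x ≥ 1` lets the summand `s * x` of the degree bound absorb the `s` lost in `d + 1 - s`.
  set x : ℝ := (n : ℝ) ^ (1 - 1 / (s : ℝ)) with hx
  have hx1 : 1 ≤ x :=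
    Real.one_le_rpow hn1 (sub_nonneg.2 ((div_le_one (by positivity)).2 hs1))
  have hxs : n * x ^ s = (n : ℝ) ^ s := by
    rw [hx, ← Real.rpow_natCast, ← Real.rpow_mul (by positivity),
      show (1 - 1 / (s : ℝ)) * s = s - 1 by field_simp,
      Real.rpow_sub_one (by positivity), Real.rpow_natCast]
    field_simp
  have hv (v : Fin n) : (t * x) ^ s ≤ (s.factorial * (G.degree v).choose s : ℕ) := by
    have h := hdeg v
    have hsd : s ≤ G.degree v := by
      have : (s : ℝ) ≤ G.degree v := by nlinarith [(Nat.cast_nonneg t : (0 : ℝ) ≤ t)]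
      exact_mod_cast this
    have hpow : (G.degree v + 1 - s) ^ s ≤ s.factorial * (G.degree v).choose s := by
      rw [← Nat.descFactorial_eq_factorial_mul_choose]
      exact Nat.pow_sub_le_descFactorial _ _
    calc (t * x) ^ s ≤ ((G.degree v + 1 - s : ℕ) : ℝ) ^ s := by
          gcongr
          rw [Nat.cast_sub (by omega)]
          push_cast
          nlinarith
      _ ≤ _ := by exact_mod_cast hpow
  have hlower : (t : ℝ) ^ s * (n : ℝ) ^ s
      ≤ (s.factorial * ∑ v : Fin n, (G.degree v).choose s : ℕ) := by
    calc (t : ℝ) ^ s * (n : ℝ) ^ s = ∑ _v : Fin n, (t * x) ^ s := by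
          rw [Finset.sum_const, Finset.card_univ, Fintype.card_fin, nsmul_eq_mul, ← hxs]
          ring
      _ ≤ ∑ v : Fin n, ((s.factorial * (G.degree v).choose s : ℕ) : ℝ) :=
          Finset.sum_le_sum fun v _ => hv v
      _ = _ := by rw [Finset.mul_sum, Nat.cast_sum]
  have hlower' : t ^ s * n ^ s ≤ s.factorial * ∑ v : Fin n, (G.degree v).choose s := by
    exact_mod_cast hlower
  have hupper : s.factorial * n.choose s ≤ n ^ s := by
    rw [← Nat.descFactorial_eq_factorial_mul_choose]
    exact Nat.descFactorial_le_pow _ _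
  rw [Fintype.card_fin]
  refine Nat.lt_of_mul_lt_mul_left (a := s.factorial) ?_
  calc s.factorial * ((t - 1) * n.choose s) = (t - 1) * (s.factorial * n.choose s) := by ring
    _ ≤ (t - 1) * n ^ s := by gcongr
    _ < t * n ^ s := Nat.mul_lt_mul_of_pos_right (by omega) (by positivity)
    _ ≤ t ^ s * n ^ s := by
        gcongr
        exact Nat.le_self_pow hs.ne' t
    _ ≤ _ := hlower'
end

section
/- Let n ≥ 1 be an integer and let X be a binomial random variable with parameters n and p = 1/n. Then for every integer t ≥ 0, the probability that X ≥ t is at most 1/t!. -/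
/-!
By the union bound over `t`-subsets of the trials, `P[X ≥ t] ≤ E[C(X, t)] = C(n, t) p ^ t`.
Concretely, `C(n, k) ≤ C(n, k) C(k, t) = C(n, t) C(n - t, k - t)` for `t ≤ k ≤ n`, and after factoring
out `C(n, t) p ^ t` the remaining sum is the binomial expansion of `(p + (1 - p)) ^ (n - t) = 1`.
For `p = 1 / n` the bound is `C(n, t) / n ^ t ≤ 1 / t!`.
-/

/-- The union bound for a binomial tail, with `n = t + m` trials. -/
lemma binomial_tail_le_choose_mul_pow (t m : ℕ) (p : ℝ) (hp0 : 0 ≤ p) (hp1 : p ≤ 1) :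
    ∑ k ∈ Finset.Icc t (t + m), ((t + m).choose k : ℝ) * p ^ k * (1 - p) ^ (t + m - k)
      ≤ ((t + m).choose t : ℝ) * p ^ t := by
  have hq : 0 ≤ 1 - p := sub_nonneg.2 hp1
  have hsum : ∑ j ∈ Finset.range (m + 1), p ^ j * (1 - p) ^ (m - j) * (m.choose j : ℝ) = 1 := by
    rw [← add_pow]
    simp
  have hIcc : Finset.Icc t (t + m) = Finset.Ico t (t + m + 1) := by
    ext k
    simp only [Finset.mem_Icc, Finset.mem_Ico]
    omega
  rw [hIcc, Finset.sum_Ico_eq_sum_range, show t + m + 1 - t = m + 1 by omega]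
  calc _ ≤ ∑ j ∈ Finset.range (m + 1), ((t + m).choose t : ℝ) * p ^ t *
        (p ^ j * (1 - p) ^ (m - j) * (m.choose j : ℝ)) := by
        refine Finset.sum_le_sum fun j hj => ?_
        have hjm : j ≤ m := by simpa [Nat.lt_succ_iff] using hj
        have hchoose : (t + m).choose (t + j) ≤ (t + m).choose t * m.choose j := by
          have h := Nat.choose_mul (n := t + m) (k := t + j) (s := t) (by omega)
          rw [Nat.add_sub_cancel_left, Nat.add_sub_cancel_left] at h
          rw [← h]
          exact Nat.le_mul_of_pos_right _ (Nat.choose_pos (by omega))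
        have hchoose' : ((t + m).choose (t + j) : ℝ) ≤ (t + m).choose t * m.choose j := by
          exact_mod_cast hchoose
        rw [Nat.add_sub_add_left]
        calc _ ≤ ((t + m).choose t * m.choose j : ℝ) * p ^ (t + j) * (1 - p) ^ (m - j) := by
              gcongr
          _ = _ := by ring
    _ = _ := by rw [← Finset.mul_sum, hsum, mul_one]

/-- If `X` is binomial with parameters `n` and `p = 1/n` (`n ≥ 1`), then
`P[X ≥ t] = Σ_{k=t}^{n} C(n,k) (1/n)^k (1 - 1/n)^{n-k} ≤ 1/t!`. -/
theorem binomial_tail_le_inv_factorial (n : ℕ) (hn : 1 ≤ n) (t : ℕ) :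
    ∑ k ∈ Finset.Icc t n,
        (n.choose k : ℝ) * (1 / (n : ℝ)) ^ k * (1 - 1 / (n : ℝ)) ^ (n - k)
      ≤ 1 / (t.factorial : ℝ) := by
  rcases lt_or_ge n t with h | h
  · rw [Finset.Icc_eq_empty (by omega), Finset.sum_empty]
    positivity
  have hn' : (1 : ℝ) ≤ n := by exact_mod_cast hn
  have hn0 : (n : ℝ) ≠ 0 := by positivity
  have htail : ∑ k ∈ Finset.Icc t n,
      (n.choose k : ℝ) * (1 / (n : ℝ)) ^ k * (1 - 1 / (n : ℝ)) ^ (n - k)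
        ≤ (n.choose t : ℝ) * (1 / (n : ℝ)) ^ t := by
    have := binomial_tail_le_choose_mul_pow t (n - t) (1 / n) (by positivity)
      (div_le_one_of_le₀ hn' (by positivity))
    rwa [Nat.add_sub_cancel' h] at this
  calc _ ≤ (n.choose t : ℝ) * (1 / (n : ℝ)) ^ t := htail
    _ ≤ (n : ℝ) ^ t / (t.factorial : ℝ) * (1 / (n : ℝ)) ^ t := by
        gcongr
        exact Nat.choose_le_pow_div t n
    _ = 1 / (t.factorial : ℝ) := by
        rw [one_div_pow]
        field_simp
end

section
/- For every integer s ≥ 2 there exists n₀ such that for every integer n ≥ n₀ there exists a bipartite graph with both parts of size n that has at least (1/2) · n^{2 - 1/s} edges and contains no copy of K_{s,t}, where t = ⌈10 s · (log n)/(log log n)⌉. -/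
/-!
The graph is found by the first-moment method, over uniformly random edge sets `E` of a fixed size
`m = ⌈n^{2-1/s}/2⌉` inside the `n²` pairs, so that the number of edges needs no separate estimate.

A fixed set of `k` pairs is contained in at most a fraction `(m/n²)^k` of the `m`-subsets
(`card_supersets_mul_le`), so a family of fewer than `(n²/m)^k` sets of size `k` is avoided by some
`m`-subset (`exists_avoiding`). A copy of `K_{s,t}` is a product of an `s`-set and a `t`-set, in one
of two orientations, hence there are at most `2 * C(n,s) * C(n,t) ≤ 2 n^s n^t / t!` of them, while
`m ≤ n^{2-1/s}` gives `(m/n²)^{st} ≤ n^{-t}`. The first moment is thus below `1` as soon as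
`2 n^s < t!`. This follows from `t! ≥ x^t e^{-x}` at `x = log n`, because
`t * log log n ≥ 10 s log n` (`two_mul_pow_lt_factorial`). Everything works from `n = 3` on.
-/

/-- A bipartite graph, given by its edge set `E ⊆ L × R` with both parts a copy
of `Fin n`, contains a copy of `K_{s,t}`: a set `U` of `s` vertices in one part
together with `t` vertices of the other part each adjacent to all of `U`. -/
def BipContainsKst {n : ℕ} (E : Finset (Fin n × Fin n)) (s t : ℕ) : Prop :=
  (∃ A B : Finset (Fin n), A.card = s ∧ B.card = t ∧
      ∀ a ∈ A, ∀ b ∈ B, (a, b) ∈ E) ∨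
  (∃ A B : Finset (Fin n), A.card = s ∧ B.card = t ∧
      ∀ a ∈ A, ∀ b ∈ B, (b, a) ∈ E)

lemma descFactorial_mul_pow_le {m N : ℕ} (h : m ≤ N) (k : ℕ) :
    m.descFactorial k * N ^ k ≤ N.descFactorial k * m ^ k := by
  induction k with
  | zero => simp
  | succ k ih =>
    rw [Nat.descFactorial_succ, Nat.descFactorial_succ, pow_succ, pow_succ]
    have h1 : (m - k) * N ≤ (N - k) * m := by
      rw [Nat.sub_mul, Nat.sub_mul, mul_comm m N]
      exact Nat.sub_le_sub_left (Nat.mul_le_mul_left k h) _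
    calc (m - k) * m.descFactorial k * (N ^ k * N)
        = ((m - k) * N) * (m.descFactorial k * N ^ k) := by ring
      _ ≤ ((N - k) * m) * (N.descFactorial k * m ^ k) := Nat.mul_le_mul h1 ih
      _ = _ := by ring

lemma choose_sub_mul_pow_le {m N k : ℕ} (h : m ≤ N) (hk : k ≤ m) :
    (N - k).choose (m - k) * N ^ k ≤ N.choose m * m ^ k := by
  have h1 := Nat.choose_mul (n := N) (k := m) (s := k) hk
  have h2 := descFactorial_mul_pow_le h k
  have hpos : 0 < N.descFactorial k := Nat.descFactorial_pos.2 (hk.trans h)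
  refine Nat.le_of_mul_le_mul_left ?_ hpos
  calc N.descFactorial k * ((N - k).choose (m - k) * N ^ k)
      = k.factorial * (N.choose k * (N - k).choose (m - k)) * N ^ k := by
        rw [Nat.descFactorial_eq_factorial_mul_choose]; ring
    _ = N.choose m * (m.descFactorial k * N ^ k) := by
        rw [← h1, Nat.descFactorial_eq_factorial_mul_choose]; ring
    _ ≤ N.choose m * (N.descFactorial k * m ^ k) := Nat.mul_le_mul_left _ h2
    _ = _ := by ring

/-- A fixed set `S` lies in a fraction at most `(m/N)^|S|` of the `m`-subsets of an `N`-set. -/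
lemma card_supersets_mul_le {α : Type*} [Fintype α] [DecidableEq α] {m : ℕ}
    (hm : m ≤ Fintype.card α) (S : Finset α) :
    ((Finset.powersetCard m Finset.univ).filter (fun E => S ⊆ E)).card * Fintype.card α ^ S.card
      ≤ (Fintype.card α).choose m * m ^ S.card := by
  by_cases hk : S.card ≤ m
  · refine le_trans (Nat.mul_le_mul_right _ ?_) (choose_sub_mul_pow_le hm hk)
    -- Removing `S` injects the `m`-subsets containing `S` into the `(m - |S|)`-subsets of `Sᶜ`.
    rw [← Finset.card_compl, ← Finset.card_powersetCard]
    refine Finset.card_le_card_of_injOn (fun E => E \ S) ?_ ?_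
    · intro E hE
      simp only [Finset.coe_filter, Finset.mem_powersetCard, Set.mem_ofPred_eq] at hE
      simp only [Finset.mem_coe, Finset.mem_powersetCard]
      refine ⟨fun x hx => by simp at hx ⊢; exact hx.2, ?_⟩
      rw [Finset.card_sdiff_of_subset hE.2, hE.1.2]
    · intro E hE E' hE' h
      simp only [Finset.coe_filter, Set.mem_ofPred_eq] at hE hE'
      simp only at h
      rw [← Finset.sdiff_union_of_subset hE.2, h, Finset.sdiff_union_of_subset hE'.2]
  · rw [Finset.filter_false_of_mem]
    · simp
    · intro E hE hS
      have := Finset.card_le_card hS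
      rw [(Finset.mem_powersetCard.1 hE).2] at this
      exact hk this

/-- First-moment method for uniformly random `m`-subsets. -/
lemma exists_avoiding {α : Type*} [Fintype α] [DecidableEq α] {m k : ℕ}
    (hm : m ≤ Fintype.card α) (F : Finset (Finset α)) (hF : ∀ S ∈ F, S.card = k)
    (h : F.card * m ^ k < Fintype.card α ^ k) :
    ∃ E : Finset α, E.card = m ∧ ∀ S ∈ F, ¬ S ⊆ E := by
  by_contra! hcon
  have hcover : Finset.powersetCard m (Finset.univ : Finset α) ⊆
      F.biUnion fun S => (Finset.powersetCard m Finset.univ).filter (fun E => S ⊆ E) := by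
    intro E hE
    obtain ⟨S, hS, hSE⟩ := hcon E (Finset.mem_powersetCard.1 hE).2
    exact Finset.mem_biUnion.2 ⟨S, hS, Finset.mem_filter.2 ⟨hE, hSE⟩⟩
  have h1 := (Finset.card_le_card hcover).trans Finset.card_biUnion_le
  rw [Finset.card_powersetCard, Finset.card_univ] at h1
  have h2 : (Fintype.card α).choose m * Fintype.card α ^ k
      ≤ (Fintype.card α).choose m * (F.card * m ^ k) :=
    calc (Fintype.card α).choose m * Fintype.card α ^ k
        ≤ (∑ S ∈ F, ((Finset.powersetCard m Finset.univ).filter (fun E => S ⊆ E)).card)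
            * Fintype.card α ^ k := Nat.mul_le_mul_right _ h1
      _ = ∑ S ∈ F, ((Finset.powersetCard m Finset.univ).filter (fun E => S ⊆ E)).card
            * Fintype.card α ^ k := Finset.sum_mul ..
      _ ≤ ∑ S ∈ F, (Fintype.card α).choose m * m ^ k := by
          refine Finset.sum_le_sum fun S hS => ?_
          have := card_supersets_mul_le hm S
          rwa [hF S hS] at this
      _ = _ := by rw [Finset.sum_const, smul_eq_mul]; ring
  exact absurd (Nat.le_of_mul_le_mul_left h2 (Nat.choose_pos hm)) (not_le.2 h)

/-- A `K_{s,t}`-free bipartite graph with `m` edges exists as soon as the expected number of copies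
in a random one is below `1`. -/
lemma exists_not_bipContainsKst {n m s t : ℕ} (hm : m ≤ n ^ 2)
    (h : 2 * (n.choose s * n.choose t) * m ^ (s * t) < (n ^ 2) ^ (s * t)) :
    ∃ E : Finset (Fin n × Fin n), E.card = m ∧ ¬ BipContainsKst E s t := by
  have hcard : Fintype.card (Fin n × Fin n) = n ^ 2 := by simp [sq]
  let P := Finset.powersetCard s (Finset.univ : Finset (Fin n)) ×ˢ
    Finset.powersetCard t (Finset.univ : Finset (Fin n))
  have hP : P.card = n.choose s * n.choose t := by simp [P]
  let F : Finset (Finset (Fin n × Fin n)) :=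
    P.image (fun q => q.1 ×ˢ q.2) ∪ P.image (fun q => q.2 ×ˢ q.1)
  have hFcard : F.card ≤ 2 * (n.choose s * n.choose t) := by
    have h1 : F.card ≤ P.card + P.card := (Finset.card_union_le _ _).trans
      (Nat.add_le_add Finset.card_image_le Finset.card_image_le)
    omega
  have hF : ∀ S ∈ F, S.card = s * t := by
    intro S hS
    simp only [F, P, Finset.mem_union, Finset.mem_image, Finset.mem_product,
      Finset.mem_powersetCard] at hS
    rcases hS with ⟨q, ⟨⟨-, h1⟩, -, h2⟩, rfl⟩ | ⟨q, ⟨⟨-, h1⟩, -, h2⟩, rfl⟩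
    · rw [Finset.card_product, h1, h2]
    · rw [Finset.card_product, h1, h2, mul_comm]
  obtain ⟨E, hE, hav⟩ := exists_avoiding (m := m) (k := s * t) (by rw [hcard]; exact hm) F hF
    (by rw [hcard]; exact (Nat.mul_le_mul_right _ hFcard).trans_lt h)
  refine ⟨E, hE, ?_⟩
  rintro (⟨A, B, hA, hB, hAB⟩ | ⟨A, B, hA, hB, hAB⟩)
  · refine hav (A ×ˢ B) ?_ fun x hx => ?_
    · exact Finset.mem_union_left _ (Finset.mem_image.2 ⟨(A, B), by simp [P, hA, hB], rfl⟩)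
    · exact hAB _ (Finset.mem_product.1 hx).1 _ (Finset.mem_product.1 hx).2
  · refine hav (B ×ˢ A) ?_ fun x hx => ?_
    · exact Finset.mem_union_right _ (Finset.mem_image.2 ⟨(A, B), by simp [P, hA, hB], rfl⟩)
    · exact hAB _ (Finset.mem_product.1 hx).2 _ (Finset.mem_product.1 hx).1

lemma two_mul_pow_lt_factorial {n s t : ℕ} (hs : 2 ≤ s) (hn : 3 ≤ n)
    (ht : (10 * s : ℝ) * Real.log n / Real.log (Real.log n) ≤ t) :
    (2 * n ^ s : ℝ) < t.factorial := by
  have hn' : (3 : ℝ) ≤ n := by exact_mod_cast hn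
  have hs' : (2 : ℝ) ≤ s := by exact_mod_cast hs
  have hL : 1 < Real.log n := by
    rw [Real.lt_log_iff_exp_lt (by linarith)]
    linarith [Real.exp_one_lt_d9]
  set L := Real.log n with hLdef
  have hLL : 0 < Real.log L := Real.log_pos hL
  rw [div_le_iff₀ hLL] at ht
  have hexpL : Real.exp L = n := Real.exp_log (by linarith)
  have hLt : Real.exp (10 * s * L) ≤ L ^ t := by
    rw [← Real.exp_log (show 0 < L by linarith), ← Real.exp_nat_mul, Real.exp_log (by linarith)]
    exact Real.exp_le_exp.2 ht
  have hfac : (0 : ℝ) < t.factorial := by exact_mod_cast t.factorial_pos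
  have h1 : L ^ t ≤ Real.exp L * t.factorial := by
    have := Real.pow_div_factorial_le_exp L (by linarith) t
    rwa [div_le_iff₀ hfac] at this
  have h2 : (n : ℝ) ^ s * n * n ≤ Real.exp (10 * s * L) := by
    rw [← hexpL, ← Real.exp_nat_mul, ← Real.exp_add, ← Real.exp_add]
    apply Real.exp_le_exp.2
    nlinarith
  have h3 : (n : ℝ) ^ s * n * n ≤ t.factorial * n := by
    rw [hexpL] at h1; linarith
  have h4 : (n : ℝ) ^ s * n ≤ t.factorial := le_of_mul_le_mul_right h3 (by linarith)
  have h5 : (0 : ℝ) < (n : ℝ) ^ s := by positivity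
  nlinarith

/-- The first moment is below `1` for `m ≤ n^{2-1/s}` edges when `2 n^s < t!`. -/
lemma first_moment_lt {n m s t : ℕ} (hs : 2 ≤ s) (hn : 3 ≤ n)
    (hm : (m : ℝ) ≤ (n : ℝ) ^ (2 - 1 / (s : ℝ))) (ht : (2 * n ^ s : ℝ) < t.factorial) :
    2 * (n.choose s * n.choose t) * m ^ (s * t) < (n ^ 2) ^ (s * t) := by
  have hn0 : (0 : ℝ) < n := by exact_mod_cast (by omega : 0 < n)
  have hs0 : (s : ℝ) ≠ 0 := by exact_mod_cast (by omega : s ≠ 0)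
  have hfac : (0 : ℝ) < t.factorial := by exact_mod_cast t.factorial_pos
  have hms : (m : ℝ) ^ s * n ≤ ((n : ℝ) ^ 2) ^ s := by
    calc (m : ℝ) ^ s * n ≤ ((n : ℝ) ^ (2 - 1 / (s : ℝ))) ^ s * n := by gcongr
      _ = (n : ℝ) ^ ((2 - 1 / (s : ℝ)) * s + 1) := by
        rw [Real.rpow_add hn0, Real.rpow_mul hn0.le, Real.rpow_natCast, Real.rpow_one]
      _ = ((n : ℝ) ^ 2) ^ s := by
        rw [show (2 - 1 / (s : ℝ)) * s + 1 = ((2 * s : ℕ) : ℝ) by push_cast; field_simp; ring,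
          Real.rpow_natCast, pow_mul]
  have hmst : (m : ℝ) ^ (s * t) * n ^ t ≤ ((n : ℝ) ^ 2) ^ (s * t) := by
    rw [pow_mul, pow_mul, ← mul_pow]
    gcongr
  have hct : (n.choose t : ℝ) * t.factorial ≤ n ^ t := by
    have := Nat.choose_le_pow_div (α := ℝ) t n
    rwa [le_div_iff₀ hfac] at this
  have hcs : (n.choose s : ℝ) ≤ n ^ s := by exact_mod_cast Nat.choose_le_pow n s
  have hreal : (2 * (n.choose s * n.choose t) * m ^ (s * t) : ℝ) < ((n : ℝ) ^ 2) ^ (s * t) := by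
    refine lt_of_mul_lt_mul_right ?_ hfac.le
    calc (2 * (n.choose s * n.choose t) * m ^ (s * t) : ℝ) * t.factorial
        = (2 * n.choose s) * ((m : ℝ) ^ (s * t) * (n.choose t * t.factorial)) := by ring
      _ ≤ (2 * n ^ s) * ((m : ℝ) ^ (s * t) * n ^ t) := by gcongr
      _ ≤ (2 * n ^ s) * ((n : ℝ) ^ 2) ^ (s * t) := by gcongr
      _ < t.factorial * ((n : ℝ) ^ 2) ^ (s * t) := by gcongr
      _ = _ := mul_comm _ _
  exact_mod_cast hreal

/-- For every `s ≥ 2` and all large `n` there is a bipartite graph with parts of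
size `n`, at least `(1/2) n^{2-1/s}` edges, and no copy of `K_{s,t}` with
`t = ⌈10 s (log n)/(log log n)⌉`. -/
theorem random_bipartite_construction (s : ℕ) (hs : 2 ≤ s) :
    ∃ n₀ : ℕ, ∀ n : ℕ, n₀ ≤ n →
      ∃ E : Finset (Fin n × Fin n),
        (1 / 2 : ℝ) * (n : ℝ) ^ (2 - 1 / (s : ℝ)) ≤ (E.card : ℝ) ∧
        ¬ BipContainsKst E s
            ⌈(10 * s : ℝ) * Real.log n / Real.log (Real.log n)⌉₊ := by
  refine ⟨3, fun n hn => ?_⟩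
  have hn1 : (1 : ℝ) ≤ n := by exact_mod_cast (by omega : 1 ≤ n)
  have hs' : (2 : ℝ) ≤ s := by exact_mod_cast hs
  have hinv : 0 ≤ 1 / (s : ℝ) := by positivity
  have hinv1 : 1 / (s : ℝ) ≤ 1 := by rw [div_le_one] <;> linarith
  set x := (n : ℝ) ^ (2 - 1 / (s : ℝ)) with hx
  have hx1 : 1 ≤ x := Real.one_le_rpow hn1 (by linarith)
  have hx2 : x ≤ (n : ℝ) ^ 2 := by
    rw [← Real.rpow_natCast]
    exact Real.rpow_le_rpow_of_exponent_le hn1 (by push_cast; linarith)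
  have hmx : ((⌈1 / 2 * x⌉₊ : ℕ) : ℝ) ≤ x := by
    rcases le_total x 2 with h | h
    · have : ⌈1 / 2 * x⌉₊ ≤ 1 := Nat.ceil_le.2 (by push_cast; linarith)
      exact le_trans (by exact_mod_cast this) hx1
    · linarith [Nat.ceil_lt_add_one (show 0 ≤ 1 / 2 * x by linarith)]
  obtain ⟨E, hE, hfree⟩ := exists_not_bipContainsKst (n := n) (m := ⌈1 / 2 * x⌉₊) (s := s)
    (t := ⌈(10 * s : ℝ) * Real.log n / Real.log (Real.log n)⌉₊)
    (by exact_mod_cast hmx.trans hx2)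
    (first_moment_lt hs hn hmx (two_mul_pow_lt_factorial hs hn (Nat.le_ceil _)))
  exact ⟨E, by rw [hE]; exact Nat.le_ceil _, hfree⟩
end

section
/- Let q be a prime power, F_q the finite field with q elements, and let s ≥ 1, r ≥ 1, d ≥ 1 be integers with s ≤ √q, r ≤ √q, s ≤ d and r ≤ d. Let P be the set of polynomials f ∈ F_q[X_1, …, X_s, Y_1, …, Y_s] whose total degree in the variables X_1, …, X_s is at most d and whose total degree in the variables Y_1, …, Y_s is at most d. Then for every set U ⊆ F_q^s of size s and every set V ⊆ F_q^s of size r, the number of f ∈ P satisfying f(u, v) = 0 for all u ∈ U and all v ∈ V equals |P| · q^{-s r}. -/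
/-!
Evaluation on `U × V` is an `F`-linear map from `PolySet F s d`, viewed as a vector space, to
`U × V → F`, and the polynomials to be counted form its kernel. The claim is therefore the
surjectivity of this map (`exists_interpolant`) together with the fact that the order of a group is
the order of the kernel times the order of the image of a homomorphism.

For surjectivity it is enough to have, for each point `a` of a finite set `S` with at most `d + 1`
points, a polynomial of total degree at most `d` that is `1` at `a` and `0` at the other points of
`S` (`exists_lagrange`): every `b ≠ a` differs from `a` in some coordinate `i`, and the product of
the linear factors `(X i - b i) / (a i - b i)` does the job. The products of such a polynomial in
the `X`-variables with such a polynomial in the `Y`-variables lie in `PolySet F s d` and interpolate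
arbitrary values on `U × V`.
-/

open MvPolynomial

/-- The set of polynomials in the `2s` variables `X₁,…,X_s,Y₁,…,Y_s` whose total
degree in the `X`-variables is at most `d` and whose total degree in the
`Y`-variables is at most `d`. -/
def PolySet (F : Type*) [CommSemiring F] (s d : ℕ) :
    Set (MvPolynomial (Fin s ⊕ Fin s) F) :=
  {f | ∀ m ∈ f.support,
    (∑ i : Fin s, m (Sum.inl i)) ≤ d ∧ (∑ i : Fin s, m (Sum.inr i)) ≤ d}

/-- `PolySet F s d` as a linear subspace of the polynomial ring. -/
def polySubmodule (F : Type*) [Field F] (s d : ℕ) :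
    Submodule F (MvPolynomial (Fin s ⊕ Fin s) F) where
  carrier := PolySet F s d
  zero_mem' := by intro m hm; simp at hm
  add_mem' := by
    classical
    intro f g hf hg m hm
    rcases Finset.mem_union.1 (support_add hm) with h | h
    · exact hf m h
    · exact hg m h
  smul_mem' := by
    intro c f hf m hm
    exact hf m (support_smul hm)

/-- A polynomial of degree at most `d` in the `X`-variables times a polynomial of degree at most `d`
in the `Y`-variables. -/
lemma rename_mul_rename_mem {F : Type*} [Field F] {s d : ℕ} {f g : MvPolynomial (Fin s) F}
    (hf : f.totalDegree ≤ d) (hg : g.totalDegree ≤ d) :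
    rename Sum.inl f * rename Sum.inr g ∈ PolySet F s d := by
  classical
  intro m hm
  obtain ⟨a, ha, b, hb, rfl⟩ := Finset.mem_add.1 (support_mul _ _ hm)
  rw [support_rename_of_injective Sum.inl_injective, Finset.mem_image] at ha
  rw [support_rename_of_injective Sum.inr_injective, Finset.mem_image] at hb
  obtain ⟨a, ha, rfl⟩ := ha
  obtain ⟨b, hb, rfl⟩ := hb
  have hda := (le_totalDegree ha).trans hf
  have hdb := (le_totalDegree hb).trans hg
  rw [Finsupp.sum_fintype _ _ (fun _ => rfl)] at hda hdb
  simp only [Finsupp.add_apply, Finsupp.mapDomain_apply Sum.inl_injective,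
    Finsupp.mapDomain_apply Sum.inr_injective]
  have h1 : ∀ i : Fin s, Finsupp.mapDomain (Sum.inr : Fin s → Fin s ⊕ Fin s) b (Sum.inl i) = 0 :=
    fun i => Finsupp.mapDomain_of_notMem_range _ _ (by simp)
  have h2 : ∀ i : Fin s, Finsupp.mapDomain (Sum.inl : Fin s → Fin s ⊕ Fin s) a (Sum.inr i) = 0 :=
    fun i => Finsupp.mapDomain_of_notMem_range _ _ (by simp)
  simp only [h1, h2, add_zero, zero_add]
  exact ⟨hda, hdb⟩

/-- Multivariate Lagrange basis polynomials of degree less than the number of points. -/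
lemma exists_lagrange {F : Type*} [Field F] {s d : ℕ} (S : Finset (Fin s → F)) (hS : S.card ≤ d + 1)
    (a : Fin s → F) (ha : a ∈ S) :
    ∃ f : MvPolynomial (Fin s) F, f.totalDegree ≤ d ∧ eval a f = 1 ∧
      ∀ b ∈ S, b ≠ a → eval b f = 0 := by
  classical
  have hsep : ∀ b : Fin s → F, ∃ f : MvPolynomial (Fin s) F, f.totalDegree ≤ 1 ∧
      (b ≠ a → eval a f = 1 ∧ eval b f = 0) := by
    intro b
    by_cases hb : b = a
    · exact ⟨0, by simp, fun h => absurd hb h⟩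
    · obtain ⟨i, hi⟩ := Function.ne_iff.1 hb
      have hi' : a i - b i ≠ 0 := sub_ne_zero.2 (Ne.symm hi)
      refine ⟨C (a i - b i)⁻¹ * (X i - C (b i)), ?_, fun _ => ⟨?_, by simp⟩⟩
      · refine (totalDegree_mul _ _).trans ?_
        rw [totalDegree_C, zero_add]
        exact (totalDegree_sub _ _).trans (by simp)
      · simp [hi']
  choose g hg1 hg2 using hsep
  refine ⟨∏ b ∈ S.erase a, g b, ?_, ?_, ?_⟩
  · refine (totalDegree_finsetProd _ _).trans ((Finset.sum_le_sum fun b _ => hg1 b).trans ?_)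
    rw [Finset.sum_const, Finset.card_erase_of_mem ha, smul_eq_mul]
    omega
  · rw [map_prod]
    exact Finset.prod_eq_one fun b hb => (hg2 b (Finset.ne_of_mem_erase hb)).1
  · intro b hb hba
    rw [map_prod]
    exact Finset.prod_eq_zero (Finset.mem_erase.2 ⟨hba, hb⟩) (hg2 b hba).2

lemma exists_interpolant {F : Type*} [Field F] {s d : ℕ} (U V : Finset (Fin s → F))
    (hU : U.card ≤ d + 1) (hV : V.card ≤ d + 1) (c : U × V → F) :
    ∃ f ∈ polySubmodule F s d, ∀ p : U × V, eval (Sum.elim p.1.1 p.2.1) f = c p := by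
  classical
  choose L hL1 hL2 hL3 using fun u : U => exists_lagrange U hU u.1 u.2
  choose M hM1 hM2 hM3 using fun v : V => exists_lagrange V hV v.1 v.2
  refine ⟨∑ p : U × V, c p • (rename Sum.inl (L p.1) * rename Sum.inr (M p.2)),
    Submodule.sum_mem _ fun p _ => Submodule.smul_mem _ _
      (rename_mul_rename_mem (hL1 p.1) (hM1 p.2)), fun p => ?_⟩
  rw [map_sum, Finset.sum_eq_single p]
  · simp [smul_eval, eval_rename, hL2, hM2]
  · intro p' _ hp
    simp only [smul_eval, map_mul, eval_rename, Sum.elim_comp_inl, Sum.elim_comp_inr]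
    by_cases h : p.1 = p'.1
    · have h' : p.2 ≠ p'.2 := fun h' => hp (Prod.ext h h').symm
      rw [hM3 p'.2 _ p.2.2 (fun e => h' (Subtype.ext e)), mul_zero, mul_zero]
    · rw [hL3 p'.1 _ p.1.2 (fun e => h (Subtype.ext e)), zero_mul, mul_zero]
  · simp

lemma card_eq_of_surjective {R M N : Type*} [Ring R] [AddCommGroup M] [Module R M]
    [AddCommGroup N] [Module R N] (φ : M →ₗ[R] N) (hφ : Function.Surjective φ) :
    Nat.card M = Nat.card N * Nat.card (LinearMap.ker φ) := by
  rw [Submodule.card_eq_card_quotient_mul_card (LinearMap.ker φ), mul_comm,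
    Nat.card_congr (φ.quotKerEquivOfSurjective hφ).toEquiv]

/-- Evaluation of the polynomials in `PolySet F s d` at the points of `U × V`. -/
noncomputable def evalGrid {F : Type*} [Field F] {s : ℕ} (d : ℕ) (U V : Finset (Fin s → F)) :
    polySubmodule F s d →ₗ[F] (U × V → F) :=
  (LinearMap.pi fun p : U × V => (aeval (Sum.elim p.1.1 p.2.1)).toLinearMap).comp
    (polySubmodule F s d).subtype

lemma evalGrid_apply {F : Type*} [Field F] {s d : ℕ} (U V : Finset (Fin s → F))
    (f : polySubmodule F s d) (p : U × V) :
    evalGrid d U V f p = eval (Sum.elim p.1.1 p.2.1) f.1 := by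
  simp [evalGrid, aeval_eq_eval]

lemma evalGrid_surjective {F : Type*} [Field F] {s d : ℕ} (U V : Finset (Fin s → F))
    (hU : U.card ≤ d + 1) (hV : V.card ≤ d + 1) : Function.Surjective (evalGrid d U V) := by
  intro c
  obtain ⟨f, hf, h⟩ := exists_interpolant U V hU hV c
  refine ⟨⟨f, hf⟩, ?_⟩
  ext p
  rw [evalGrid_apply]
  exact h p

/-- If `s, r ≤ √q`, `s, r ≤ d`, `U` has size `s` and `V` has size `r`, then a
`q^{-sr}` fraction of the polynomials of `P` vanish on all of `U × V`:
`#{f ∈ P : f ≡ 0 on U × V} · q^{sr} = #P`. -/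
theorem count_vanishing_on_grid (F : Type*) [Field F] [Fintype F]
    (s r d : ℕ) (hs : 1 ≤ s) (hr : 1 ≤ r) (hd : 1 ≤ d)
    (hsq : (s : ℝ) ≤ Real.sqrt (Fintype.card F))
    (hrq : (r : ℝ) ≤ Real.sqrt (Fintype.card F))
    (hsd : s ≤ d) (hrd : r ≤ d)
    (U V : Finset (Fin s → F)) (hU : U.card = s) (hV : V.card = r) :
    ({f ∈ PolySet F s d | ∀ u ∈ U, ∀ v ∈ V, eval (Sum.elim u v) f = 0}).ncard
        * Fintype.card F ^ (s * r)
      = (PolySet F s d).ncard := by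
  have hsurj := evalGrid_surjective (d := d) U V (hU.trans_le (by omega)) (hV.trans_le (by omega))
  have hev := evalGrid_apply (d := d) U V
  generalize evalGrid d U V = ev at hsurj hev
  have hcard : Nat.card (polySubmodule F s d)
      = Fintype.card F ^ (s * r) * Nat.card (LinearMap.ker ev) := by
    rw [card_eq_of_surjective ev hsurj, Nat.card_fun]
    simp [hU, hV]
  have hker : Nat.card (LinearMap.ker ev)
      = ({f ∈ PolySet F s d | ∀ u ∈ U, ∀ v ∈ V, eval (Sum.elim u v) f = 0}).ncard := by
    rw [← Nat.card_coe_set_eq]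
    refine Nat.card_congr
      { toFun := fun f => ⟨f.1.1, f.1.2, fun u hu v hv => ?_⟩
        invFun := fun f => ⟨⟨f.1, f.2.1⟩, ?_⟩
        left_inv := fun _ => rfl
        right_inv := fun _ => rfl }
    · exact (hev f.1 (⟨u, hu⟩, ⟨v, hv⟩)).symm.trans (congrFun (LinearMap.mem_ker.1 f.2) _)
    · exact LinearMap.mem_ker.2 (funext fun p => (hev _ p).trans (f.2.2 _ p.1.2 _ p.2.2))
  rw [← hker, mul_comm, ← hcard, ← Nat.card_coe_set_eq]
  rfl
end

section
/- For every integer s ≥ 4 there exist a positive integer t, a constant c > 0, and an integer n₀ such that for every integer n ≥ n₀ there exists a simple graph on at most n vertices that contains no copy of the complete bipartite graph K_{s,t} and has at least c · n^{2 - 1/s} edges. -/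
/-- Each unknown of the system `∏ i, (x i + a i j) = 1` (one equation per `j`, as many equations
as unknowns) is integral over the base ring of the parameters. The solution lies in a field here,
so that integral elements are detected by valuation rings. -/
theorem isIntegral_of_field {ι : Type*} [Fintype ι] {B K : Type*} [CommRing B] [Field K]
    [Algebra B K] (a : ι → ι → B) (ha : ∀ i, Pairwise fun j j' => IsUnit (a i j - a i j'))
    (x : ι → K) (hx : ∀ j, ∏ i, (x i + algebraMap B K (a i j)) = 1) (i₀ : ι) :
    IsIntegral B (x i₀) := by
  classical
  by_contra hint
  obtain ⟨V, hBV, hxV⟩ : ∃ V : ValuationSubring K,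
      (integralClosure B K).toSubring ≤ V.toSubring ∧ x i₀ ∉ V := by
    have : IsIntegrallyClosedIn (integralClosure B K).toSubring K :=
      inferInstanceAs (IsIntegrallyClosedIn (integralClosure B K) K)
    exact Subring.exists_le_valuationSubring_of_isIntegrallyClosedIn hint
  have hB : ∀ b : B, V.valuation (algebraMap B K b) ≤ 1 := fun b =>
    (V.valuation_le_one_iff _).2 (hBV (isIntegral_algebraMap (x := b)))
  have hU : ∀ b : B, IsUnit b → V.valuation (algebraMap B K b) = 1 := by
    intro b hb
    obtain ⟨u, hu⟩ := hb.exists_right_inv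
    refine le_antisymm (hB b) ?_
    have h1 : V.valuation (algebraMap B K b) * V.valuation (algebraMap B K u) = 1 := by
      rw [← map_mul, ← map_mul, hu, map_one, map_one]
    calc (1 : V.ValueGroup) = _ := h1.symm
      _ ≤ V.valuation (algebraMap B K b) * 1 := mul_le_mul_right (hB u) _
      _ = _ := mul_one _
  -- Sending each `j` to an offending `i` is injective, since two nonunits `x i + a i j` and
  -- `x i + a i j'` would have the unit `a i j - a i j'` as difference; but it misses `i₀`.
  have key : ∃ j, ∀ i, i ≠ i₀ → x i ∈ V → V.valuation (x i + algebraMap B K (a i j)) = 1 := by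
    by_contra hcon
    push Not at hcon
    choose f hf1 hf2 hf3 using hcon
    have hinj : Function.Injective f := by
      intro j j' hjj
      by_contra hne
      have lt : ∀ j, V.valuation (x (f j) + algebraMap B K (a (f j) j)) < 1 := fun j =>
        lt_of_le_of_ne (V.valuation.map_add_le ((V.valuation_le_one_iff _).2 (hf2 j)) (hB _))
          (hf3 j)
      have h1 := hU _ (ha (f j) hne)
      have h2 := V.valuation.map_sub_lt (lt j) (hjj ▸ lt j')
      rw [add_sub_add_left_eq_sub, ← map_sub, h1] at h2
      exact lt_irrefl _ h2
    obtain ⟨j, hj⟩ := (Finite.injective_iff_surjective.1 hinj) i₀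
    exact hf1 j hj
  obtain ⟨j, hj⟩ := key
  have hbig : ∀ i, x i ∉ V → 1 < V.valuation (x i + algebraMap B K (a i j)) := by
    intro i hi
    have h1 : 1 < V.valuation (x i) := by
      rw [← not_le, V.valuation_le_one_iff]; exact hi
    rwa [V.valuation.map_add_eq_of_lt_left ((hB _).trans_lt h1)]
  have hprod : ∏ i ∈ Finset.univ.erase i₀, V.valuation (x i + algebraMap B K (a i j)) ≥ 1 := by
    refine Finset.one_le_prod' fun i hi => ?_
    by_cases h : x i ∈ V
    · exact (hj i (Finset.ne_of_mem_erase hi) h).ge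
    · exact (hbig i h).le
  have h1 := congrArg V.valuation (hx j)
  rw [map_prod, map_one, ← Finset.mul_prod_erase _ _ (Finset.mem_univ i₀)] at h1
  have h2 : V.valuation (x i₀ + algebraMap B K (a i₀ j)) * 1 ≤ 1 :=
    (mul_le_mul_right hprod _).trans_eq h1
  rw [mul_one] at h2
  exact absurd (hbig i₀ hxV) (not_lt.2 h2)

/-- The integrality statement over an arbitrary commutative ring. If `x i₀` is not integral, the
values at `x i₀` of monic polynomials form a multiplicative set avoiding `0`; a prime `P` disjoint
from it keeps `x i₀` non-integral in the fraction field of `C ⧸ P`. -/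
theorem isIntegral_of_prod {ι : Type*} [Fintype ι] {B C : Type*} [CommRing B] [CommRing C]
    [Algebra B C] (a : ι → ι → B) (ha : ∀ i, Pairwise fun j j' => IsUnit (a i j - a i j'))
    (x : ι → C) (hx : ∀ j, ∏ i, (x i + algebraMap B C (a i j)) = 1) (i₀ : ι) :
    IsIntegral B (x i₀) := by
  by_contra hint
  let S : Submonoid C :=
    { carrier := {c | ∃ p : Polynomial B, p.Monic ∧ Polynomial.aeval (x i₀) p = c}
      one_mem' := ⟨1, Polynomial.monic_one, map_one _⟩
      mul_mem' := by
        rintro _ _ ⟨p, hp, rfl⟩ ⟨q, hq, rfl⟩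
        exact ⟨p * q, hp.mul hq, map_mul _ _ _⟩ }
  obtain ⟨P, hP, -, hdisj⟩ := Ideal.exists_le_prime_disjoint (⊥ : Ideal C) S (by
    rw [Set.disjoint_left]
    rintro c hc ⟨p, hp, rfl⟩
    exact hint ⟨p, hp, hc⟩)
  have h := isIntegral_of_field (K := FractionRing (C ⧸ P)) a ha
    (fun i => algebraMap C (FractionRing (C ⧸ P)) (x i))
    (fun j => by
      have := congrArg (algebraMap C (FractionRing (C ⧸ P))) (hx j)
      simpa [← IsScalarTower.algebraMap_apply] using this) i₀
  obtain ⟨p, hp, hp0⟩ := h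
  rw [← Polynomial.aeval_def, Polynomial.aeval_algebraMap_apply,
    IsScalarTower.algebraMap_apply C (C ⧸ P) (FractionRing (C ⧸ P)),
    FaithfulSMul.algebraMap_eq_zero_iff, Ideal.Quotient.algebraMap_eq,
    Ideal.Quotient.eq_zero_iff_mem] at hp0
  exact Set.disjoint_left.1 hdisj hp0 ⟨p, hp, rfl⟩

/-- A field with a matrix of parameters that has pairwise distinct entries in each row. -/
structure Params (ι : Type) where
  K : Type
  [field : Field K]
  a : ι → ι → K
  inj : ∀ i, Function.Injective (a i)

attribute [instance] Params.field

/-- The solutions of the system `∏ i, (y i + a i j) = 1`. -/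
def Params.Sol {ι : Type} [Fintype ι] (P : Params ι) : Type :=
  {y : ι → P.K // ∀ j, ∏ i, (y i + P.a i j) = 1}

/-- The number of values of the unknown `y i₀` is bounded independently of the field and the
parameters: integrality over the product of all fields `P.K` yields one monic polynomial whose
components annihilate `y i₀` in each of them. -/
theorem exists_uniform_bound (ι : Type) [Fintype ι] (i₀ : ι) :
    ∃ d : ℕ, ∀ (P : Params ι) (T : Finset P.K), (∀ z ∈ T, ∃ y : P.Sol, y.1 i₀ = z) →
      T.card ≤ d := by
  classical
  let B := ∀ P : Params ι, P.K
  let C := ∀ Q : (Σ P : Params ι, P.Sol), Q.1.K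
  let φ : B →+* C := RingHom.pi fun Q => Pi.evalRingHom _ Q.1
  let : Algebra B C := φ.toAlgebra
  have hint : IsIntegral B ((fun Q => Q.2.1 i₀ : C)) := by
    refine isIntegral_of_prod (C := C) (fun i j => (fun P => P.a i j : B)) ?_
      (fun i Q => Q.2.1 i) ?_ i₀
    · intro i j j' hne
      rw [Pi.isUnit_iff]
      intro P
      exact (sub_ne_zero.2 fun h => hne (P.inj i h)).isUnit
    · intro j
      funext Q
      rw [Finset.prod_apply]
      exact Q.2.2 j
  obtain ⟨p, hp, hp0⟩ := hint
  refine ⟨p.natDegree, fun P T hT => ?_⟩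
  let pP := p.map (Pi.evalRingHom (fun P : Params ι => P.K) P)
  have hmonic : pP.Monic := hp.map _
  have hsub : T ⊆ pP.roots.toFinset := by
    intro z hz
    obtain ⟨y, rfl⟩ := hT z hz
    rw [Multiset.mem_toFinset, Polynomial.mem_roots hmonic.ne_zero, Polynomial.IsRoot,
      Polynomial.eval_map]
    have h := congrArg (Pi.evalRingHom (fun Q : (Σ P : Params ι, P.Sol) => Q.1.K) ⟨P, y⟩) hp0
    rw [Polynomial.hom_eval₂, map_zero] at h
    exact h
  calc T.card ≤ pP.roots.toFinset.card := Finset.card_le_card hsub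
    _ ≤ pP.roots.card := Multiset.toFinset_card_le _
    _ ≤ pP.natDegree := pP.card_roots'
    _ ≤ p.natDegree := Polynomial.natDegree_map_le

/-- Any `s` elements of `𝔽_{p^s}` have boundedly many common neighbours in the norm graph,
uniformly in `p`; the exponent `∑ i < s, p ^ i` is that of the norm to `𝔽_p`. -/
theorem norm_system_bound (s : ℕ) (hs : 0 < s) :
    ∃ d : ℕ, ∀ (p : ℕ) [Fact p.Prime] (A T : Finset (GaloisField p s)), A.card = s →
      (∀ a ∈ A, ∀ z ∈ T, (z + a) ^ (∑ i ∈ Finset.range s, p ^ i) = 1) → T.card ≤ d := by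
  obtain ⟨d, hd⟩ := exists_uniform_bound (Fin s) ⟨0, hs⟩
  refine ⟨d, fun p _ A T hA h => ?_⟩
  -- The unknown with index `0` is `z` itself, so counting its values counts the elements of `T`.
  let e : Fin s ≃ A := (A.equivFinOfCardEq hA).symm
  refine hd ⟨GaloisField p s, fun i j => (e j : GaloisField p s) ^ p ^ (i : ℕ), ?_⟩ T ?_
  · intro i j j' hjj
    exact e.injective (Subtype.ext (iterateFrobenius_inj (GaloisField p s) p i hjj))
  · intro z hz
    refine ⟨⟨fun i => z ^ p ^ (i : ℕ), fun j => ?_⟩, by simp⟩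
    simp only [← add_pow_char_pow]
    rw [Finset.prod_pow_eq_pow_sum, Fin.sum_univ_eq_sum_range (fun i => p ^ i)]
    exact h _ (e j).2 z hz

/-- There are `∑ i < s, p ^ i` elements of norm one in `𝔽_{p^s}`. -/
theorem exists_roots (p s : ℕ) [Fact p.Prime] (hs : 0 < s) :
    ∃ Z : Finset (GaloisField p s), Z.card = ∑ i ∈ Finset.range s, p ^ i ∧
      ∀ z ∈ Z, z ^ (∑ i ∈ Finset.range s, p ^ i) = 1 := by
  have hp : 2 ≤ p := (Fact.out : p.Prime).two_le
  set M := ∑ i ∈ Finset.range s, p ^ i with hM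
  have hMpos : 0 < M := Finset.sum_pos (fun i _ => by positivity) ⟨0, by simpa using hs⟩
  have hgeom : (p - 1) * M = p ^ s - 1 := by
    have h1 : 1 ≤ p ^ s := Nat.one_le_pow _ _ (by omega)
    zify [h1, show 1 ≤ p by omega]
    rw [hM]
    push_cast
    exact mul_geom_sum _ _
  have : Fintype (GaloisField p s) := Fintype.ofFinite _
  obtain ⟨g, hg⟩ := IsCyclic.exists_ofOrder_eq_natCard (α := (GaloisField p s)ˣ)
  rw [Nat.card_units, GaloisField.card p s hs.ne'] at hg
  have hprim : IsPrimitiveRoot (g : GaloisField p s) (p ^ s - 1) := by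
    rw [IsPrimitiveRoot.coe_units_iff, ← hg]
    exact IsPrimitiveRoot.orderOf g
  have hprim' := hprim.pow (by rw [← hgeom]; exact Nat.mul_pos (by omega) hMpos) hgeom.symm
  refine ⟨Polynomial.nthRootsFinset M 1, hprim'.card_nthRootsFinset, fun z hz => ?_⟩
  exact (Polynomial.mem_nthRootsFinset hMpos _).1 hz

/-- The norm graph on `𝔽_{p^s}`, transported to `Fin (p ^ s)`, is `K_{s,t}`-free for some `t`
not depending on `p`, and has at least `p ^ (2 * s - 1) / 2` edges. -/
theorem exists_graph (s : ℕ) (hs : 2 ≤ s) :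
    ∃ t : ℕ, 0 < t ∧ ∀ p : ℕ, p.Prime → ∃ (G : SimpleGraph (Fin (p ^ s)))
      (_ : DecidableRel G.Adj), ¬ ContainsKst G s t ∧
        p ^ (2 * s - 1) ≤ 2 * G.edgeFinset.card := by
  classical
  obtain ⟨d, hd⟩ := norm_system_bound s (by omega)
  refine ⟨d + 1, Nat.succ_pos d, fun p hp => ?_⟩
  have : Fact p.Prime := ⟨hp⟩
  obtain ⟨Z, hZcard, hZ⟩ := exists_roots p s (by omega)
  set M := ∑ i ∈ Finset.range s, p ^ i with hM
  have hM1 : p ^ (s - 1) + 1 ≤ M := by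
    obtain ⟨r, rfl⟩ : ∃ r, s = r + 1 + 1 := ⟨s - 2, by omega⟩
    rw [hM, Finset.sum_range_succ, Finset.sum_range_succ', pow_zero]
    simp only [Nat.add_sub_cancel]
    omega
  let e : Fin (p ^ s) ≃ GaloisField p s :=
    (Finite.equivFinOfCardEq (GaloisField.card p s (by omega))).symm
  let G : SimpleGraph (Fin (p ^ s)) :=
    { Adj := fun x y => x ≠ y ∧ (e y + e x) ^ M = 1
      symm := ⟨fun x y h => ⟨h.1.symm, by rw [add_comm]; exact h.2⟩⟩
      loopless := ⟨fun x h => h.1 rfl⟩ }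
  refine ⟨G, Classical.decRel _, ?_, ?_⟩
  · rintro ⟨A, T, hA, hT, -, h⟩
    have := hd p (A.map e.toEmbedding) (T.map e.toEmbedding) (by simpa using hA) (by
      intro a ha z hz
      obtain ⟨a', ha', rfl⟩ := Finset.mem_map.1 ha
      obtain ⟨z', hz', rfl⟩ := Finset.mem_map.1 hz
      exact (h a' ha' z' hz').2)
    rw [Finset.card_map, hT] at this
    omega
  -- A norm-one `z` gives the neighbour `z - e x` of `x`, except when that is `x` itself.
  · have hdeg : ∀ x, p ^ (s - 1) ≤ G.degree x := by
      intro x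
      have hinj : Function.Injective fun z => e.symm (z - e x) :=
        e.symm.injective.comp sub_left_injective
      have hsub : (Z.image fun z => e.symm (z - e x)).erase x ⊆ G.neighborFinset x := by
        intro y hy
        obtain ⟨hyx, hy⟩ := Finset.mem_erase.1 hy
        obtain ⟨z, hz, rfl⟩ := Finset.mem_image.1 hy
        rw [SimpleGraph.mem_neighborFinset]
        exact ⟨hyx.symm, by simpa using hZ z hz⟩
      have h1 := Finset.card_le_card hsub
      have h2 := Finset.pred_card_le_card_erase (s := Z.image fun z => e.symm (z - e x)) (a := x)
      rw [Finset.card_image_of_injective _ hinj, hZcard] at h2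
      rw [SimpleGraph.card_neighborFinset_eq_degree] at h1
      omega
    have h := Finset.card_nsmul_le_sum Finset.univ (fun x => G.degree x) _ fun x _ => hdeg x
    rw [G.sum_degrees_eq_twice_card_edges, Finset.card_univ, Fintype.card_fin, smul_eq_mul,
      ← pow_add, show s + (s - 1) = 2 * s - 1 by omega] at h
    exact h.trans_eq (by congr!)

theorem exists_prime_pow_between (s n : ℕ) (hs : 0 < s) (hn : 2 ^ s ≤ n) :
    ∃ p : ℕ, p.Prime ∧ p ^ s ≤ n ∧ n ≤ (4 * p) ^ s := by
  let k := Nat.findGreatest (fun k => (2 * k) ^ s ≤ n) n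
  have h1n : 1 ≤ n := Nat.one_le_two_pow.trans hn
  have hk1 : 1 ≤ k := Nat.le_findGreatest h1n (by simpa using hn)
  have hk : (2 * k) ^ s ≤ n :=
    Nat.findGreatest_spec (P := fun k => (2 * k) ^ s ≤ n) h1n (by simpa using hn)
  have hk' : n < (2 * (k + 1)) ^ s := by
    by_contra! hcon
    have hle : k + 1 ≤ n := calc
      k + 1 ≤ 2 * (k + 1) := by omega
      _ ≤ (2 * (k + 1)) ^ s := Nat.le_self_pow hs.ne' _
      _ ≤ n := hcon
    have : k + 1 ≤ k := Nat.le_findGreatest hle hcon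
    omega
  obtain ⟨p, hp, hkp, hp2⟩ := Nat.exists_prime_lt_and_le_two_mul k (by omega)
  exact ⟨p, hp, (Nat.pow_le_pow_left hp2 s).trans hk,
    hk'.le.trans (Nat.pow_le_pow_left (by omega) s)⟩

/-- For every `s ≥ 4` there are `t`, `c > 0` and `n₀` such that for all
`n ≥ n₀` there is a `K_{s,t}`-free graph on at most `n` vertices with at least
`c · n^{2 - 1/s}` edges. -/
theorem random_algebraic_construction (s : ℕ) (hs : 4 ≤ s) :
    ∃ t : ℕ, 0 < t ∧ ∃ c : ℝ, 0 < c ∧ ∃ n₀ : ℕ, ∀ n : ℕ, n₀ ≤ n →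
      ∃ m : ℕ, m ≤ n ∧
        ∃ (G : SimpleGraph (Fin m)) (_ : DecidableRel G.Adj),
          ¬ ContainsKst G s t ∧
          c * (n : ℝ) ^ (2 - 1 / (s : ℝ)) ≤ (G.edgeFinset.card : ℝ) := by
  obtain ⟨t, ht, H⟩ := exists_graph s (by omega)
  refine ⟨t, ht, 1 / (2 * 4 ^ (2 * s - 1)), by positivity, 2 ^ s, fun n hn => ?_⟩
  obtain ⟨p, hp, hpn, hnp⟩ := exists_prime_pow_between s n (by omega) hn
  obtain ⟨G, hdec, hfree, hedge⟩ := H p hp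
  refine ⟨p ^ s, hpn, G, hdec, hfree, ?_⟩
  have hs' : (4 : ℝ) ≤ s := by exact_mod_cast hs
  have hexp : (0 : ℝ) ≤ 2 - 1 / (s : ℝ) := by
    have : 1 / (s : ℝ) ≤ 1 := by rw [div_le_one (by linarith)]; linarith
    linarith
  have h1 : (n : ℝ) ^ (2 - 1 / (s : ℝ)) ≤ (4 * p : ℝ) ^ (2 * s - 1) := by
    calc (n : ℝ) ^ (2 - 1 / (s : ℝ)) ≤ ((4 * p : ℝ) ^ s) ^ (2 - 1 / (s : ℝ)) :=
          Real.rpow_le_rpow (by positivity) (by exact_mod_cast hnp) hexp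
      _ = (4 * p : ℝ) ^ (2 * s - 1) := by
          rw [← Real.rpow_natCast, ← Real.rpow_natCast, ← Real.rpow_mul (by positivity)]
          congr 1
          rw [Nat.cast_sub (by omega)]
          push_cast
          field_simp
  have h2 : (p : ℝ) ^ (2 * s - 1) ≤ 2 * (G.edgeFinset.card : ℝ) := by exact_mod_cast hedge
  calc 1 / (2 * 4 ^ (2 * s - 1)) * (n : ℝ) ^ (2 - 1 / (s : ℝ))
      ≤ 1 / (2 * 4 ^ (2 * s - 1)) * (4 * p : ℝ) ^ (2 * s - 1) := by gcongr
    _ = (p : ℝ) ^ (2 * s - 1) / 2 := by rw [mul_pow]; field_simp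
    _ ≤ _ := by linarith
end

section
/- For every integer d ≥ 2 and every prime p > d there exist polynomials f_1, f_2, f_3 ∈ F_p[x, y, z] with total degrees deg f_1 = 2d, deg f_2 = deg f_3 = 1, such that the common zero set {(x, y, z) ∈ F_p³ : f_1(x,y,z) = f_2(x,y,z) = f_3(x,y,z) = 0} has exactly d(d-1) elements. -/
/-!
Take `f₂ = f₃ = z`, which reduces the problem to a plane curve of degree `2d` with exactly `d(d-1)`
rational points. Since `p > d ≥ 2` is odd, there is a nonsquare `c` in `F_p`. With
`g = ∏_{i < d} (x - i)` and `h = ∏_{i < d - 1} (y - i)`, put `f₁ = g² - c h²`. It vanishes at a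
rational point only where `g` and `h` both do (`eq_zero_of_sq_sub_nonsquare_mul_sq`), that is, on a
grid of `d(d-1)` points, because `0, …, d - 1` are distinct modulo `p`. Its degree is
`deg g² = 2d`, since `deg h² = 2(d-1)` is smaller (`totalDegree_rootProd`).
-/

open MvPolynomial

/-- The product of the linear polynomials `X j - i` for `0 ≤ i < n`. -/
noncomputable def rootProd (p : ℕ) (j : Fin 3) (n : ℕ) : MvPolynomial (Fin 3) (ZMod p) :=
  ∏ i ∈ Finset.range n, (X j - C (i : ZMod p))

theorem totalDegree_X_sub_C (p : ℕ) [Fact p.Prime] (j : Fin 3) (a : ZMod p) :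
    (X j - C a : MvPolynomial (Fin 3) (ZMod p)).totalDegree = 1 := by
  rw [sub_eq_add_neg, ← C_neg, totalDegree_add_eq_left_of_totalDegree_lt, totalDegree_X]
  rw [totalDegree_C, totalDegree_X]
  exact Nat.one_pos

theorem X_sub_C_ne_zero' (p : ℕ) [Fact p.Prime] (j : Fin 3) (a : ZMod p) :
    (X j - C a : MvPolynomial (Fin 3) (ZMod p)) ≠ 0 := by
  intro h
  have := totalDegree_X_sub_C p j a
  simp [h] at this

theorem rootProd_ne_zero (p : ℕ) [Fact p.Prime] (j : Fin 3) (n : ℕ) : rootProd p j n ≠ 0 :=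
  Finset.prod_ne_zero_iff.2 fun _ _ => X_sub_C_ne_zero' p j _

theorem totalDegree_rootProd (p : ℕ) [Fact p.Prime] (j : Fin 3) (n : ℕ) :
    (rootProd p j n).totalDegree = n := by
  induction n with
  | zero => simp [rootProd]
  | succ n ih =>
    have h : rootProd p j (n + 1) = rootProd p j n * (X j - C (n : ZMod p)) :=
      Finset.prod_range_succ _ _
    rw [h, totalDegree_mul_of_isDomain (rootProd_ne_zero p j n) (X_sub_C_ne_zero' p j _), ih,
      totalDegree_X_sub_C]

theorem totalDegree_rootProd_sq (p : ℕ) [Fact p.Prime] (j : Fin 3) (n : ℕ) :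
    (rootProd p j n ^ 2).totalDegree = 2 * n := by
  rw [pow_two, totalDegree_mul_of_isDomain (rootProd_ne_zero p j n) (rootProd_ne_zero p j n),
    totalDegree_rootProd, two_mul]

theorem eval_rootProd_eq_zero_iff (p : ℕ) [Fact p.Prime] (j : Fin 3) (n : ℕ)
    (x : Fin 3 → ZMod p) :
    eval x (rootProd p j n) = 0 ↔
      x j ∈ (Finset.range n).image (fun i : ℕ => (i : ZMod p)) := by
  simp only [rootProd, map_prod, Finset.prod_eq_zero_iff, map_sub, eval_X, eval_C, sub_eq_zero,
    Finset.mem_image, eq_comm (a := x j)]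

theorem card_image_natCast_range (p n : ℕ) (h : n ≤ p) :
    ((Finset.range n).image (fun i : ℕ => (i : ZMod p))).card = n := by
  rw [Finset.card_image_of_injOn, Finset.card_range]
  intro a ha b hb hab
  rw [Finset.mem_coe, Finset.mem_range] at ha hb
  exact Nat.ModEq.eq_of_lt_of_lt ((ZMod.natCast_eq_natCast_iff _ _ _).1 hab)
    (ha.trans_le h) (hb.trans_le h)

/-- The binary form `a² - c b²` is anisotropic when `c` is not a square. -/
theorem eq_zero_of_sq_sub_nonsquare_mul_sq {K : Type*} [Field K] {c a b : K} (hc : ¬ IsSquare c)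
    (h : a ^ 2 - c * b ^ 2 = 0) : a = 0 ∧ b = 0 := by
  have hb : b = 0 := by
    by_contra hb
    refine hc ⟨a / b, ?_⟩
    field_simp
    linear_combination -h
  subst hb
  simpa using h

theorem bezout_constant_counterexample (d p : ℕ) (hd : 2 ≤ d)
    (hp : p.Prime) (hdp : d < p) :
    ∃ f₁ f₂ f₃ : MvPolynomial (Fin 3) (ZMod p),
      f₁.totalDegree = 2 * d ∧ f₂.totalDegree = 1 ∧ f₃.totalDegree = 1 ∧
      {x : Fin 3 → ZMod p |
          eval x f₁ = 0 ∧ eval x f₂ = 0 ∧ eval x f₃ = 0}.ncard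
        = d * (d - 1) := by
  have : Fact p.Prime := ⟨hp⟩
  obtain ⟨c, hc⟩ : ∃ c : ZMod p, ¬ IsSquare c :=
    FiniteField.exists_nonsquare (by rw [ZMod.ringChar_zmod_n]; omega)
  refine ⟨rootProd p 0 d ^ 2 - C c * rootProd p 1 (d - 1) ^ 2, X 2, X 2, ?_, totalDegree_X _,
    totalDegree_X _, ?_⟩
  · have hlt : (-(C c * rootProd p 1 (d - 1) ^ 2)).totalDegree
        < (rootProd p 0 d ^ 2).totalDegree := by
      rw [totalDegree_neg, totalDegree_rootProd_sq]
      refine (totalDegree_mul _ _).trans_lt ?_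
      rw [totalDegree_C, totalDegree_rootProd_sq]
      omega
    rw [sub_eq_add_neg, totalDegree_add_eq_left_of_totalDegree_lt hlt, totalDegree_rootProd_sq]
  · set A := (Finset.range d).image (fun i : ℕ => (i : ZMod p)) with hA
    set B := (Finset.range (d - 1)).image (fun i : ℕ => (i : ZMod p)) with hB
    have hset : {x : Fin 3 → ZMod p |
          eval x (rootProd p 0 d ^ 2 - C c * rootProd p 1 (d - 1) ^ 2) = 0 ∧
            eval x (X 2 : MvPolynomial (Fin 3) (ZMod p)) = 0 ∧
            eval x (X 2 : MvPolynomial (Fin 3) (ZMod p)) = 0}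
        = (fun q : ZMod p × ZMod p => ![q.1, q.2, 0]) '' (A ×ˢ B : Finset _) := by
      ext x
      simp only [Set.mem_ofPred_eq, map_sub, map_mul, map_pow, eval_C, eval_X, and_self,
        Set.mem_image, Finset.mem_coe, Finset.mem_product]
      constructor
      · rintro ⟨h, h2⟩
        obtain ⟨h0, h1⟩ := eq_zero_of_sq_sub_nonsquare_mul_sq hc h
        refine ⟨(x 0, x 1), ⟨(eval_rootProd_eq_zero_iff p 0 d x).1 h0,
          (eval_rootProd_eq_zero_iff p 1 (d - 1) x).1 h1⟩, ?_⟩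
        ext i
        fin_cases i <;> simp [h2]
      · rintro ⟨q, ⟨h0, h1⟩, rfl⟩
        rw [(eval_rootProd_eq_zero_iff p 0 d _).2 h0,
          (eval_rootProd_eq_zero_iff p 1 (d - 1) _).2 h1]
        simp
    have hinj : Function.Injective (fun q : ZMod p × ZMod p => ![q.1, q.2, 0]) := by
      intro q r h
      exact Prod.ext (congrFun h 0) (congrFun h 1)
    rw [hset, Set.ncard_image_of_injective _ hinj, Set.ncard_coe_finset, Finset.card_product,
      hA, hB, card_image_natCast_range p d hdp.le, card_image_natCast_range p (d - 1) (by omega)]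
end
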